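/- arXiv:1410.3125 — 5 statements merged into one kernel-verified Lean document; each statement's English description precedes it below -/
import Mathlib

section
/- Let (A, b, c) be an LP in dual form with A an m×n real matrix, and let (X_P, X_Q) be a fractional automorphism of (A, b, c). If x ∈ ℝ^n is feasible, i.e. A·x ≤ b entrywise, then X_P·x is also feasible and ⟨c, X_P·x⟩ = ⟨c, x⟩. -/
open Matrix

/-- A square real matrix is doubly stochastic: nonnegative entries,
every row and every column sums to 1. -/
def IsDoublyStochastic {m : ℕ} (S : Matrix (Fin m) (Fin m) ℝ) : Prop :=
  (∀ i j, 0 ≤ S i j) ∧ (∀ i, ∑ j, S i j = 1) ∧ (∀ j, ∑ i, S i j = 1)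

/-- A fractional automorphism of the LP `(A, b, c)` in dual form:
a pair of doubly stochastic matrices with `A·X_P = X_Q·A`, `cᵀ·X_P = cᵀ`
and `X_Q·b = b`. -/
def IsFractionalAutomorphism {m n : ℕ} (A : Matrix (Fin m) (Fin n) ℝ)
    (b : Fin m → ℝ) (c : Fin n → ℝ)
    (XP : Matrix (Fin n) (Fin n) ℝ) (XQ : Matrix (Fin m) (Fin m) ℝ) : Prop :=
  IsDoublyStochastic XP ∧ IsDoublyStochastic XQ ∧
    A * XP = XQ * A ∧ XP.vecMul c = c ∧ XQ.mulVec b = b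

theorem mulVec_le_mulVec_of_nonneg {l m R : Type*} [Fintype m]
    [Semiring R] [PartialOrder R] [IsOrderedRing R]
    {M : Matrix l m R} (hM : ∀ i j, 0 ≤ M i j) {v w : m → R} (hvw : v ≤ w) :
    M *ᵥ v ≤ M *ᵥ w :=
  fun i => dotProduct_le_dotProduct_of_nonneg_left hvw (hM i)

theorem fractionalAutomorphism_feasible_general {m n R : Type*} [Fintype m] [Fintype n]
    [Semiring R] [PartialOrder R] [IsOrderedRing R]
    {A : Matrix m n R} {b : m → R} {c : n → R} {P : Matrix n n R} {Q : Matrix m m R}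
    (hQ : ∀ i j, 0 ≤ Q i j) (hAP : A * P = Q * A) (hc : c ᵥ* P = c) (hb : Q *ᵥ b ≤ b)
    {x : n → R} (hx : A *ᵥ x ≤ b) :
    A *ᵥ (P *ᵥ x) ≤ b ∧ c ⬝ᵥ P *ᵥ x = c ⬝ᵥ x := by
  constructor
  · calc
      A *ᵥ (P *ᵥ x) = Q *ᵥ (A *ᵥ x) := by rw [mulVec_mulVec, hAP, ← mulVec_mulVec]
      _ ≤ Q *ᵥ b := mulVec_le_mulVec_of_nonneg hQ hx
      _ ≤ b := hb
  · rw [dotProduct_mulVec, hc]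

/-- If `x` is feasible for the LP `(A,b,c)` and `(X_P, X_Q)` is a
fractional automorphism, then `X_P·x` is feasible with the same objective value. -/
theorem fractionalAutomorphism_feasible {m n : ℕ}
    (A : Matrix (Fin m) (Fin n) ℝ) (b : Fin m → ℝ) (c : Fin n → ℝ)
    (XP : Matrix (Fin n) (Fin n) ℝ) (XQ : Matrix (Fin m) (Fin m) ℝ)
    (hFA : IsFractionalAutomorphism A b c XP XQ)
    (x : Fin n → ℝ) (hx : A.mulVec x ≤ b) :
    A.mulVec (XP.mulVec x) ≤ b ∧ c ⬝ᵥ XP.mulVec x = c ⬝ᵥ x := by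
  obtain ⟨_, ⟨hQ, _⟩, hA, hc, hb⟩ := hFA
  exact fractionalAutomorphism_feasible_general hQ hA hc hb.le hx
end

section
/- Let (A, b, c) be an LP in dual form with A an m×n real matrix, and let (X_P, X_Q) be a fractional automorphism of (A, b, c). If x* ∈ ℝ^n is an optimal solution, i.e. x* is feasible and ⟨c, x*⟩ ≤ ⟨c, x⟩ for every feasible x, then X_P·x* is also an optimal solution. -/
open Matrix

section

variable {R ι ι' κ κ' : Type*} [Semiring R] [PartialOrder R] [IsOrderedRing R]

theorem mulVec_le_mulVec_of_nonneg_s2 [Fintype κ] {Q : Matrix ι κ R} (hQ : ∀ i j, 0 ≤ Q i j)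
    {u v : κ → R} (huv : u ≤ v) : Q *ᵥ u ≤ Q *ᵥ v :=
  fun i => dotProduct_le_dotProduct_of_nonneg_left huv (hQ i)

theorem mulVec_mulVec_le_of_mul_eq_mul [Fintype ι'] [Fintype κ] [Fintype κ']
    {A : Matrix ι κ R} {A' : Matrix ι' κ' R} {P : Matrix κ κ' R} {Q : Matrix ι ι' R}
    {b : ι → R} {b' : ι' → R} (hQ : ∀ i j, 0 ≤ Q i j) (hA : A * P = Q * A')
    (hb : Q *ᵥ b' ≤ b) {x : κ' → R} (hx : A' *ᵥ x ≤ b') :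
    A *ᵥ (P *ᵥ x) ≤ b :=
  calc A *ᵥ (P *ᵥ x) = Q *ᵥ (A' *ᵥ x) := by rw [mulVec_mulVec, hA, ← mulVec_mulVec]
    _ ≤ Q *ᵥ b' := mulVec_le_mulVec_of_nonneg_s2 hQ hx
    _ ≤ b := hb

theorem fractionalAutomorphism_optimal_general [Fintype ι] [Fintype κ]
    {A : Matrix ι κ R} {b : ι → R} {c : κ → R} {P : Matrix κ κ R} {Q : Matrix ι ι R}
    (hQ : ∀ i j, 0 ≤ Q i j) (hA : A * P = Q * A) (hc : c ᵥ* P = c) (hb : Q *ᵥ b ≤ b)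
    {x : κ → R} (hfeas : A *ᵥ x ≤ b) (hopt : ∀ y : κ → R, A *ᵥ y ≤ b → c ⬝ᵥ x ≤ c ⬝ᵥ y) :
    A *ᵥ (P *ᵥ x) ≤ b ∧ ∀ y : κ → R, A *ᵥ y ≤ b → c ⬝ᵥ P *ᵥ x ≤ c ⬝ᵥ y := by
  have objective_eq : c ⬝ᵥ P *ᵥ x = c ⬝ᵥ x := by rw [dotProduct_mulVec, hc]
  exact ⟨mulVec_mulVec_le_of_mul_eq_mul hQ hA hb hfeas,
    fun y hy => objective_eq.trans_le (hopt y hy)⟩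

end

/-- If `x*` is an optimal solution of the LP `(A,b,c)` and
`(X_P, X_Q)` is a fractional automorphism, then `X_P·x*` is optimal as well. -/
theorem fractionalAutomorphism_optimal {m n : ℕ}
    (A : Matrix (Fin m) (Fin n) ℝ) (b : Fin m → ℝ) (c : Fin n → ℝ)
    (XP : Matrix (Fin n) (Fin n) ℝ) (XQ : Matrix (Fin m) (Fin m) ℝ)
    (hFA : IsFractionalAutomorphism A b c XP XQ)
    (xs : Fin n → ℝ) (hfeas : A.mulVec xs ≤ b)
    (hopt : ∀ x : Fin n → ℝ, A.mulVec x ≤ b → c ⬝ᵥ xs ≤ c ⬝ᵥ x) :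
    A.mulVec (XP.mulVec xs) ≤ b ∧
      ∀ x : Fin n → ℝ, A.mulVec x ≤ b → c ⬝ᵥ XP.mulVec xs ≤ c ⬝ᵥ x := by
  obtain ⟨-, ⟨hQ, -, -⟩, hA, hc, hb⟩ := hFA
  exact fractionalAutomorphism_optimal_general hQ hA hc hb.le hfeas hopt
end

section
/- Let A be an m×n real matrix, and let (Q, P) be an equitable pair of partitions for A, where Q partitions the row indices and P partitions the column indices. Let X_P be the partition matrix of P and X_Q the partition matrix of Q. Then A·X_P = X_Q·A. -/
/-!
Multiplying by a partition matrix averages over classes: the `(i, j)` entry of `A * X_P` is the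
mean of row `i` over the class of `j`, and that of `X_Q * A` is the mean of column `j` over the
class of `i`. If the block sums are constant along rows and along columns, each of these is the
mean of `A` over the block spanned by the two classes. Equal value counts imply equal block sums.
-/

open Matrix

open scoped Classical

/-- The partition matrix of a partition (given by the class map `f`). -/
noncomputable def partitionMatrix {n k : ℕ} (f : Fin n → Fin k) :
    Matrix (Fin n) (Fin n) ℝ :=
  fun i j =>
    if f i = f j then (1 : ℝ) / ((Finset.univ.filter fun l => f l = f i).card : ℝ)
    else 0

section BlockAverages

open scoped Finset

theorem sum_eq_sum_of_card_filter_eq {ι κ M : Type*} [AddCommMonoid M] [DecidableEq M]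
    {s : Finset ι} {t : Finset κ} {g : ι → M} {h : κ → M}
    (hcard : ∀ v, #{i ∈ s | g i = v} = #{j ∈ t | h j = v}) :
    ∑ i ∈ s, g i = ∑ j ∈ t, h j := by
  have same_values : s.val.map g = t.val.map h := by
    ext v
    simpa only [Multiset.count_map, eq_comm (a := v), Finset.card_def, Finset.filter_val]
      using hcard v
  exact congrArg Multiset.sum same_values

theorem card_nsmul_eq_card_nsmul_of_sum_eq {ι κ M : Type*} [AddCommMonoid M]
    {s : Finset ι} {t : Finset κ} {A : ι → κ → M} {a b : M}
    (hrow : ∀ i ∈ s, ∑ j ∈ t, A i j = a) (hcol : ∀ j ∈ t, ∑ i ∈ s, A i j = b) :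
    #s • a = #t • b :=
  calc
    #s • a = ∑ i ∈ s, ∑ j ∈ t, A i j := (Finset.sum_eq_card_nsmul hrow).symm
    _ = ∑ j ∈ t, ∑ i ∈ s, A i j := Finset.sum_comm
    _ = #t • b := Finset.sum_eq_card_nsmul hcol

/-- The partition matrix of the fibres of `f`, for an arbitrary finite index type and with entries
in an arbitrary division semiring. Multiplication by it replaces entries by their class means. -/
def averagingMatrix {ι κ : Type*} (K : Type*) [Fintype ι] [DecidableEq κ] [DivisionSemiring K]
    (f : ι → κ) : Matrix ι ι K :=
  Matrix.of fun i j => if f i = f j then (#{l | f l = f i} : K)⁻¹ else 0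

theorem partitionMatrix_eq_averagingMatrix {n k : ℕ} (f : Fin n → Fin k) :
    partitionMatrix f = averagingMatrix ℝ f := by
  ext i j
  simp only [partitionMatrix, averagingMatrix, Matrix.of_apply, one_div]

variable {ι ι' κ κ' K : Type*} [DivisionSemiring K]

theorem mul_averagingMatrix_apply [Fintype ι] [DecidableEq κ] (A : Matrix ι' ι K) (f : ι → κ)
    (i : ι') (j : ι) :
    (A * averagingMatrix K f) i j = (∑ l with f l = f j, A i l) / #{l | f l = f j} := by
  rw [Matrix.mul_apply, div_eq_mul_inv, Finset.sum_mul, Finset.sum_filter]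
  refine Finset.sum_congr rfl fun l _ => ?_
  by_cases h : f l = f j <;> simp [averagingMatrix, h]

theorem averagingMatrix_mul_apply [Fintype ι] [DecidableEq κ] (A : Matrix ι ι' K) (f : ι → κ)
    (i : ι) (j : ι') :
    (averagingMatrix K f * A) i j = (∑ l with f l = f i, A l j) / #{l | f l = f i} := by
  rw [Matrix.mul_apply, div_eq_mul_inv, ← (Nat.cast_commute _ _).inv_left₀.eq, Finset.mul_sum,
    Finset.sum_filter]
  refine Finset.sum_congr rfl fun l _ => ?_
  simp only [averagingMatrix, Matrix.of_apply, ite_mul, zero_mul, eq_comm (a := f i)]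

theorem cast_card_fiber_ne_zero [CharZero K] [Fintype ι] [DecidableEq κ] (f : ι → κ) (i : ι) :
    (#{l | f l = f i} : K) ≠ 0 :=
  Nat.cast_ne_zero.mpr (Finset.card_ne_zero_of_mem (Finset.mem_filter_univ i |>.mpr rfl))

theorem equitable_partition_fractionalAutomorphism_general [CharZero K] [Fintype ι] [Fintype ι']
    [DecidableEq κ] [DecidableEq κ'] (A : Matrix ι ι' K) (fR : ι → κ) (fC : ι' → κ')
    (hrow : ∀ i i', fR i = fR i' → ∀ C, ∑ j with fC j = C, A i j = ∑ j with fC j = C, A i' j)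
    (hcol : ∀ j j', fC j = fC j' → ∀ R, ∑ i with fR i = R, A i j = ∑ i with fR i = R, A i j') :
    A * averagingMatrix K fC = averagingMatrix K fR * A := by
  ext i j
  have block_sum : #{k | fR k = fR i} • ∑ l with fC l = fC j, A i l =
      #{l | fC l = fC j} • ∑ k with fR k = fR i, A k j :=
    card_nsmul_eq_card_nsmul_of_sum_eq
      (fun k hk => hrow k i (Finset.mem_filter.mp hk).2 (fC j))
      (fun l hl => hcol l j (Finset.mem_filter.mp hl).2 (fR i))
  rw [mul_averagingMatrix_apply, averagingMatrix_mul_apply,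
    (Nat.cast_commute _ _).div_eq_div_iff (cast_card_fiber_ne_zero fC j)
      (cast_card_fiber_ne_zero fR i)]
  simpa only [nsmul_eq_mul'] using block_sum

end BlockAverages

/-- If `(Q, P)` is an equitable pair of partitions for `A`
(rows partitioned by `fR`, columns by `fC`, with matching value counts in
both directions), then `A·X_P = X_Q·A` for the corresponding partition
matrices. -/
theorem equitable_partition_fractionalAutomorphism {m n p q : ℕ}
    (A : Matrix (Fin m) (Fin n) ℝ) (fR : Fin m → Fin q) (fC : Fin n → Fin p)
    (hrow : ∀ i i' : Fin m, fR i = fR i' → ∀ (C : Fin p) (v : ℝ),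
      (Finset.univ.filter fun j => fC j = C ∧ A i j = v).card =
        (Finset.univ.filter fun j => fC j = C ∧ A i' j = v).card)
    (hcol : ∀ j j' : Fin n, fC j = fC j' → ∀ (R : Fin q) (v : ℝ),
      (Finset.univ.filter fun i => fR i = R ∧ A i j = v).card =
        (Finset.univ.filter fun i => fR i = R ∧ A i j' = v).card) :
    A * partitionMatrix fC = partitionMatrix fR * A := by
  simp only [← Finset.filter_filter] at hrow hcol
  simpa only [partitionMatrix_eq_averagingMatrix] using
    equitable_partition_fractionalAutomorphism_general A fR fC
      (fun i i' h C => sum_eq_sum_of_card_filter_eq (hrow i i' h C))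
      (fun j j' h R => sum_eq_sum_of_card_filter_eq (hcol j j' h R))
end

section
/- Let A be an m×n real matrix and let (X_P, X_Q) be a pair of doubly stochastic matrices (X_P of size n×n, X_Q of size m×m) with A·X_P = X_Q·A. Let P be the partition of the column indices into the classes of the equivalence relation generated by the relation {(j, j') : (X_P)_{jj'} > 0}, and let Q be the analogous partition of the row indices obtained from X_Q. Then (Q, P) is sum-equitable for A: for every row class R ∈ Q, every pair of rows i, i' ∈ R, and every column class C ∈ P, one has Σ_{j∈C} A_{ij} = Σ_{j∈C} A_{i'j}; and for every column class C ∈ P, every pair of columns j, j' ∈ C, and every row class R ∈ Q, one has Σ_{i∈R} A_{ij} = Σ_{i∈R} A_{ij'}. -/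
open Matrix

open scoped Classical

/-!
Call a function on the indices class-constant for a matrix `S` if it is constant on the classes
generated by the positive entries of `S`. If `S` is row stochastic, `S *ᵥ f` averages `f` within
classes, so class-constant functions are fixed by `S`. If `S` is moreover doubly stochastic, the
Dirichlet form `∑ i, ∑ j, S i j * (f i - f j) ^ 2` vanishes whenever `S *ᵥ f = f`, so conversely
every fixed function is class-constant. From `A * XP = XQ * A` it follows that `A` maps functions
fixed by `XP` to functions fixed by `XQ`, and applying this to the indicator of a column class gives
the equality of row sums. The column sums are the row sums of `Aᵀ`, with `XQᵀ` and `XPᵀ` in the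
roles of `XP` and `XQ`.
-/

section SumEquitable

variable {ι κ R : Type*}

/-- The equivalence relation generated by the positive entries of a square matrix. A partition of
the indices is encoded throughout as the `Setoid` whose classes are its blocks. -/
def positiveSetoid [Zero R] [LT R] (S : Matrix ι ι R) : Setoid ι :=
  Relation.EqvGen.setoid fun i j => 0 < S i j

theorem positiveSetoid_transpose [Zero R] [LT R] (S : Matrix ι ι R) :
    positiveSetoid Sᵀ = positiveSetoid S := by
  have transpose_le (T : Matrix ι ι R) : positiveSetoid Tᵀ ≤ positiveSetoid T :=
    Setoid.eqvGen_le fun i j hij => .symm _ _ (.rel j i hij)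
  exact le_antisymm (transpose_le S) (transpose_le Sᵀ)

variable [Fintype κ]

/-- Row sums of `A` over a block of the column partition `s` agree for rows in the same block of
the row partition `r`; a block of `s` is given by a representative `j₀`. This is one of the two
halves of sum-equitability. -/
def IsRowSumEquitable [AddCommMonoid R] (A : Matrix ι κ R) (r : Setoid ι) (s : Setoid κ) : Prop :=
  ∀ i i', r i i' → ∀ j₀, ∑ j with s j₀ j, A i j = ∑ j with s j₀ j, A i' j

theorem isRowSumEquitable_of_le_ker_mulVec [NonAssocSemiring R] {A : Matrix ι κ R}
    {r : Setoid ι} {s : Setoid κ} (h : ∀ f : κ → R, s ≤ Setoid.ker f → r ≤ Setoid.ker (A *ᵥ f)) :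
    IsRowSumEquitable A r s := by
  intro i i' hi j₀
  let blockIndicator : κ → R := fun j => if s j₀ j then 1 else 0
  have le_ker : s ≤ Setoid.ker blockIndicator := fun j k hjk =>
    if_congr ⟨fun hj => s.trans hj hjk, fun hk => s.trans hk (s.symm hjk)⟩ rfl rfl
  have mulVec_apply (a : ι) : (A *ᵥ blockIndicator) a = ∑ j with s j₀ j, A a j := by
    simp [blockIndicator, mulVec, dotProduct, Finset.sum_filter]
  rw [← mulVec_apply, ← mulVec_apply]
  exact h blockIndicator le_ker hi

variable [Fintype ι]

/-- The pair of partitions `(r, s)` of the rows and columns of `A` is sum-equitable. The condition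
on column sums is expressed as the one on row sums of `Aᵀ`. -/
def IsSumEquitable [AddCommMonoid R] (A : Matrix ι κ R) (r : Setoid ι) (s : Setoid κ) : Prop :=
  IsRowSumEquitable A r s ∧ IsRowSumEquitable Aᵀ s r

theorem mulVec_eq_self_of_positiveSetoid_le_ker [DecidableEq ι] [Semiring R] [PartialOrder R]
    [IsOrderedRing R] {S : Matrix ι ι R} (hS : S ∈ rowStochastic R ι) {f : ι → R}
    (hf : positiveSetoid S ≤ Setoid.ker f) : S *ᵥ f = f := by
  ext i
  have mul_eq (j : ι) : S i j * f j = S i j * f i := by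
    rcases (nonneg_of_mem_rowStochastic hS (i := i) (j := j)).eq_or_lt with hij | hij
    · simp [← hij]
    · have : f i = f j := hf (.rel i j hij)
      rw [this]
  calc
    ∑ j, S i j * f j = ∑ j, S i j * f i := Finset.sum_congr rfl fun j _ => mul_eq j
    _ = f i := by rw [← Finset.sum_mul, sum_row_of_mem_rowStochastic hS, one_mul]

theorem sum_sum_mul_sub_sq [CommRing R] {S : Matrix ι ι R} (hrow : ∀ i, ∑ j, S i j = 1)
    (hcol : ∀ j, ∑ i, S i j = 1) (f : ι → R) :
    ∑ i, ∑ j, S i j * (f i - f j) ^ 2 = 2 * (f ⬝ᵥ (f - S *ᵥ f)) := by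
  have sum_row : ∑ i, ∑ j, S i j * f i ^ 2 = f ⬝ᵥ f := by
    simp only [← Finset.sum_mul, hrow, one_mul, dotProduct, sq]
  have sum_col : ∑ i, ∑ j, S i j * f j ^ 2 = f ⬝ᵥ f := by
    rw [Finset.sum_comm]
    simp only [← Finset.sum_mul, hcol, one_mul, dotProduct, sq]
  have sum_cross : ∑ i, ∑ j, 2 * (f i * (S i j * f j)) = 2 * (f ⬝ᵥ S *ᵥ f) := by
    simp only [← Finset.mul_sum, dotProduct, mulVec]
  calc
    ∑ i, ∑ j, S i j * (f i - f j) ^ 2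
      = ∑ i, ∑ j, (S i j * f i ^ 2 + S i j * f j ^ 2 - 2 * (f i * (S i j * f j))) :=
        Finset.sum_congr rfl fun i _ => Finset.sum_congr rfl fun j _ => by ring
    _ = f ⬝ᵥ f + f ⬝ᵥ f - 2 * (f ⬝ᵥ S *ᵥ f) := by
        simp only [Finset.sum_sub_distrib, Finset.sum_add_distrib, sum_row, sum_col, sum_cross]
    _ = 2 * (f ⬝ᵥ (f - S *ᵥ f)) := by rw [dotProduct_sub]; ring

section LinearOrderedCommRing

variable [DecidableEq ι] [CommRing R] [LinearOrder R] [IsStrictOrderedRing R]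

theorem eq_of_mulVec_eq_self_of_pos {S : Matrix ι ι R} (hS : S ∈ doublyStochastic R ι)
    {f : ι → R} (hf : S *ᵥ f = f) {i j : ι} (hij : 0 < S i j) : f i = f j := by
  have nonneg (a b : ι) : 0 ≤ S a b * (f a - f b) ^ 2 :=
    mul_nonneg (nonneg_of_mem_doublyStochastic hS) (sq_nonneg _)
  have sum_eq_zero : ∑ a, ∑ b, S a b * (f a - f b) ^ 2 = 0 := by
    simp [sum_sum_mul_sub_sq (sum_row_of_mem_doublyStochastic hS)
      (sum_col_of_mem_doublyStochastic hS), hf]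
  have row_eq_zero : ∑ b, S i b * (f i - f b) ^ 2 = 0 :=
    (Finset.sum_eq_zero_iff_of_nonneg fun a _ => Finset.sum_nonneg fun b _ => nonneg a b).1
      sum_eq_zero i (Finset.mem_univ i)
  have entry_eq_zero : S i j * (f i - f j) ^ 2 = 0 :=
    (Finset.sum_eq_zero_iff_of_nonneg fun b _ => nonneg i b).1 row_eq_zero j (Finset.mem_univ j)
  exact sub_eq_zero.1 (sq_eq_zero_iff.1 ((mul_eq_zero.1 entry_eq_zero).resolve_left hij.ne'))

theorem positiveSetoid_le_ker_of_mulVec_eq_self {S : Matrix ι ι R}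
    (hS : S ∈ doublyStochastic R ι) {f : ι → R} (hf : S *ᵥ f = f) :
    positiveSetoid S ≤ Setoid.ker f :=
  Setoid.eqvGen_le fun _ _ => eq_of_mulVec_eq_self_of_pos hS hf

variable [DecidableEq κ] {A : Matrix ι κ R} {XP : Matrix κ κ R} {XQ : Matrix ι ι R}

theorem isRowSumEquitable_positiveSetoid (hP : XP ∈ rowStochastic R κ)
    (hQ : XQ ∈ doublyStochastic R ι) (hcomm : A * XP = XQ * A) :
    IsRowSumEquitable A (positiveSetoid XQ) (positiveSetoid XP) := by
  refine isRowSumEquitable_of_le_ker_mulVec fun f hf =>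
    positiveSetoid_le_ker_of_mulVec_eq_self hQ ?_
  calc
    XQ *ᵥ A *ᵥ f = A *ᵥ XP *ᵥ f := by rw [mulVec_mulVec, ← hcomm, mulVec_mulVec]
    _ = A *ᵥ f := by rw [mulVec_eq_self_of_positiveSetoid_le_ker hP hf]

theorem fractionalAutomorphism_sum_equitable_general (hP : XP ∈ doublyStochastic R κ)
    (hQ : XQ ∈ doublyStochastic R ι) (hcomm : A * XP = XQ * A) :
    IsSumEquitable A (positiveSetoid XQ) (positiveSetoid XP) := by
  have hQrow : XQᵀ ∈ rowStochastic R ι :=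
    (mem_doublyStochastic_iff_mem_rowStochastic_and_mem_colStochastic.1
      (transpose_mem_doublyStochastic_iff.2 hQ)).1
  have hProw : XP ∈ rowStochastic R κ :=
    (mem_doublyStochastic_iff_mem_rowStochastic_and_mem_colStochastic.1 hP).1
  have hcommT : Aᵀ * XQᵀ = XPᵀ * Aᵀ := by rw [← transpose_mul, ← hcomm, transpose_mul]
  refine ⟨isRowSumEquitable_positiveSetoid hProw hQ hcomm, ?_⟩
  rw [← positiveSetoid_transpose XP, ← positiveSetoid_transpose XQ]
  exact isRowSumEquitable_positiveSetoid hQrow (transpose_mem_doublyStochastic_iff.2 hP) hcommT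

end LinearOrderedCommRing

end SumEquitable

/-- Let `(X_P, X_Q)` be doubly stochastic with `A·X_P = X_Q·A`.
Let `P` (resp. `Q`) be the partition of the column (resp. row) indices into
classes of the equivalence relation generated by positivity of the entries of
`X_P` (resp. `X_Q`).  Then `(Q, P)` is sum-equitable for `A`: row sums over a
column class agree for rows in the same row class, and column sums over a row
class agree for columns in the same column class. -/
theorem fractionalAutomorphism_sum_equitable {m n : ℕ}
    (A : Matrix (Fin m) (Fin n) ℝ)
    (XP : Matrix (Fin n) (Fin n) ℝ) (XQ : Matrix (Fin m) (Fin m) ℝ)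
    (hP : IsDoublyStochastic XP) (hQ : IsDoublyStochastic XQ)
    (hcomm : A * XP = XQ * A) :
    (∀ i i' : Fin m, Relation.EqvGen (fun a b => 0 < XQ a b) i i' →
      ∀ j₀ : Fin n,
        ∑ j ∈ Finset.univ.filter
            (fun j => Relation.EqvGen (fun a b => 0 < XP a b) j₀ j), A i j =
        ∑ j ∈ Finset.univ.filter
            (fun j => Relation.EqvGen (fun a b => 0 < XP a b) j₀ j), A i' j) ∧
    (∀ j j' : Fin n, Relation.EqvGen (fun a b => 0 < XP a b) j j' →
      ∀ i₀ : Fin m,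
        ∑ i ∈ Finset.univ.filter
            (fun i => Relation.EqvGen (fun a b => 0 < XQ a b) i₀ i), A i j =
        ∑ i ∈ Finset.univ.filter
            (fun i => Relation.EqvGen (fun a b => 0 < XQ a b) i₀ i), A i j') :=
  fractionalAutomorphism_sum_equitable_general (mem_doublyStochastic_iff_sum.2 hP)
    (mem_doublyStochastic_iff_sum.2 hQ) hcomm
end

section
/- Let (A, b, c) be an LP in dual form with A an m×n real matrix, and let (X_P, X_Q) be a fractional automorphism of (A, b, c) in which X_P is the partition matrix of a partition U of the column indices with normalized incidence matrix B (an n×k matrix). If y* ∈ ℝ^k is an optimal solution of the reduced LP (A·B, b, Bᵀ·c), i.e., A·B·y* ≤ b entrywise and ⟨Bᵀ·c, y*⟩ ≤ ⟨Bᵀ·c, y⟩ for every y ∈ ℝ^k with A·B·y ≤ b entrywise, then B·y* is an optimal solution of (A, b, c): A·(B·y*) ≤ b entrywise and ⟨c, B·y*⟩ ≤ ⟨c, x⟩ for every x ∈ ℝ^n with A·x ≤ b entrywise. -/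
open Matrix

/-- The normalized incidence matrix of a partition. -/
noncomputable def incidenceMatrix {n k : ℕ} (f : Fin n → Fin k) :
    Matrix (Fin n) (Fin k) ℝ :=
  fun i m =>
    if f i = m then (1 : ℝ) / Real.sqrt ((Finset.univ.filter fun l => f l = m).card : ℝ)
    else 0

/-!
If `A * (B * D) = Q * A` with `Q` entrywise nonnegative and `Q *ᵥ b ≤ b`, then `B * D` preserves
feasibility for `(A, b, c)`; equivalently, `D` sends feasible points of `(A, b, c)` to feasible
points of the reduced program. If moreover `c ᵥ* (B * D) = c`, the objective at `x` equals the
reduced objective at `D *ᵥ x`, so optimality of `y` for the reduced program bounds it below by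
`c ⬝ᵥ B *ᵥ y`. A partition matrix factors as `B * Bᵀ`, where `B` is the normalized incidence matrix.
-/

theorem incidenceMatrix_mul_transpose {n k : ℕ} (f : Fin n → Fin k) :
    incidenceMatrix f * (incidenceMatrix f)ᵀ = partitionMatrix f := by
  ext i j
  by_cases h : f i = f j
  · simp [mul_apply, incidenceMatrix, partitionMatrix, h, ← mul_inv]
  · simp [mul_apply, incidenceMatrix, partitionMatrix, h]

/-- `x` is an optimal solution of the linear program in dual form `(A, b, c)`: it minimizes the
objective `⟨c, ·⟩` over the feasible region `A *ᵥ x ≤ b`. -/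
def IsOptimalSolution {ι κ R : Type*} [Fintype κ] [NonUnitalNonAssocSemiring R] [LE R]
    (A : Matrix ι κ R) (b : ι → R) (c x : κ → R) : Prop :=
  A *ᵥ x ≤ b ∧ ∀ z : κ → R, A *ᵥ z ≤ b → c ⬝ᵥ x ≤ c ⬝ᵥ z

section OrderedSemiring

variable {ι κ μ R : Type*} [Fintype ι] [Fintype κ] [Semiring R] [PartialOrder R] [IsOrderedRing R]

theorem mulVec_mono_of_nonneg {Q : Matrix μ ι R} (hQ : ∀ i j, 0 ≤ Q i j) :
    Monotone (Q *ᵥ ·) :=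
  fun _ _ hvw i ↦ dotProduct_le_dotProduct_of_nonneg_left hvw (hQ i)

theorem feasible_mulVec_of_intertwines {A : Matrix ι κ R} {b : ι → R} {P : Matrix κ κ R}
    {Q : Matrix ι ι R} (hQ : ∀ i j, 0 ≤ Q i j) (hA : A * P = Q * A) (hb : Q *ᵥ b ≤ b)
    {x : κ → R} (hx : A *ᵥ x ≤ b) : A *ᵥ (P *ᵥ x) ≤ b :=
  calc
    A *ᵥ (P *ᵥ x) = Q *ᵥ (A *ᵥ x) := by rw [mulVec_mulVec, hA, ← mulVec_mulVec]
    _ ≤ Q *ᵥ b := mulVec_mono_of_nonneg hQ hx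
    _ ≤ b := hb

theorem lifted_solution_optimal_general [Fintype μ] {A : Matrix ι κ R} {b : ι → R} {c : κ → R}
    {B : Matrix κ μ R} {D : Matrix μ κ R} {Q : Matrix ι ι R} (hQ : ∀ i j, 0 ≤ Q i j)
    (hA : A * (B * D) = Q * A) (hb : Q *ᵥ b ≤ b) (hc : c ᵥ* (B * D) = c) {y : μ → R}
    (hy : IsOptimalSolution (A * B) b (c ᵥ* B) y) : IsOptimalSolution A b c (B *ᵥ y) := by
  obtain ⟨hfeas, hopt⟩ := hy
  refine ⟨by rwa [mulVec_mulVec], fun x hx ↦ ?_⟩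
  have hDx : (A * B) *ᵥ (D *ᵥ x) ≤ b := by
    simpa only [mulVec_mulVec, Matrix.mul_assoc] using feasible_mulVec_of_intertwines hQ hA hb hx
  calc
    c ⬝ᵥ B *ᵥ y = c ᵥ* B ⬝ᵥ y := dotProduct_mulVec ..
    _ ≤ c ᵥ* B ⬝ᵥ D *ᵥ x := hopt _ hDx
    _ = c ᵥ* (B * D) ⬝ᵥ x := by rw [dotProduct_mulVec, vecMul_vecMul]
    _ = c ⬝ᵥ x := by rw [hc]

end OrderedSemiring

/-- Let `(X_P, X_Q)` be a fractional automorphism of `(A,b,c)`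
with `X_P` the partition matrix of a partition with normalized incidence
matrix `B`.  If `y*` is optimal for the reduced LP `(A·B, b, Bᵀ·c)`, then
`B·y*` is optimal for `(A, b, c)`. -/
theorem lifted_solution_optimal {m n k : ℕ}
    (A : Matrix (Fin m) (Fin n) ℝ) (b : Fin m → ℝ) (c : Fin n → ℝ)
    (f : Fin n → Fin k) (XQ : Matrix (Fin m) (Fin m) ℝ)
    (hFA : IsFractionalAutomorphism A b c (partitionMatrix f) XQ)
    (ys : Fin k → ℝ)
    (hfeas : (A * incidenceMatrix f).mulVec ys ≤ b)
    (hopt : ∀ y : Fin k → ℝ, (A * incidenceMatrix f).mulVec y ≤ b →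
      (incidenceMatrix f)ᵀ.mulVec c ⬝ᵥ ys ≤ (incidenceMatrix f)ᵀ.mulVec c ⬝ᵥ y) :
    A.mulVec ((incidenceMatrix f).mulVec ys) ≤ b ∧
      ∀ x : Fin n → ℝ, A.mulVec x ≤ b →
        c ⬝ᵥ (incidenceMatrix f).mulVec ys ≤ c ⬝ᵥ x := by
  obtain ⟨-, ⟨hQ, -, -⟩, hA, hc, hb⟩ := incidenceMatrix_mul_transpose f ▸ hFA
  exact lifted_solution_optimal_general hQ hA hb.le hc ⟨hfeas, mulVec_transpose _ c ▸ hopt⟩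
end
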